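/- Let G be an antipodal distance-regular graph of diameter 3 which is an antipodal r-cover, with distinct adjacency eigenvalues k > θ₁ > θ₂ > θ₃, and let q > 0 be a real number. Then the q-distance matrix 𝔻_q has exactly three distinct eigenvalues if and only if θ₃ = −r/q − 1. -/

import Mathlib

open Matrix

variable {V : Type*} [Fintype V] [DecidableEq V]

/-- The distance-`i` matrix of a graph: the `(x,y)` entry is 1 if `dist x y = i`, else 0. -/
noncomputable def distM (G : SimpleGraph V) (i : ℕ) : Matrix V V ℝ :=
  Matrix.of fun x y => if G.dist x y = i then (1 : ℝ) else 0

/-- The `q`-distance matrix `𝔻_q = ∑_{i=1}^D (1 + 1/q + ⋯ + 1/q^{i-1}) • A_i`. -/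
noncomputable def qDist (G : SimpleGraph V) (D : ℕ) (q : ℝ) : Matrix V V ℝ :=
  ∑ i ∈ Finset.Icc 1 D, (∑ j ∈ Finset.range i, (1 / q) ^ j) • distM G i

/-- `G` is distance-regular with diameter `D` and intersection numbers `b i`, `c i`
(with `c 1 = 1`): for any vertices `x, y` at distance `i ≤ D`, the number of neighbors
of `y` at distance `i - 1` from `x` is `c i` and the number of neighbors of `y` at
distance `i + 1` from `x` is `b i`. -/
def IsDRG (G : SimpleGraph V) (D : ℕ) (b c : ℕ → ℕ) : Prop :=
  G.Connected ∧
  (∀ x y : V, G.dist x y ≤ D) ∧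
  (∃ x y : V, G.dist x y = D) ∧
  c 1 = 1 ∧
  ∀ i ≤ D, ∀ x y : V, G.dist x y = i →
    ({z : V | G.Adj y z ∧ G.dist x z = i - 1} : Set V).ncard = c i ∧
    ({z : V | G.Adj y z ∧ G.dist x z = i + 1} : Set V).ncard = b i

/-- `a i = k - b i - c i` as a real number, where `k = b 0`. -/
noncomputable def aInt (b c : ℕ → ℕ) (i : ℕ) : ℝ := (b 0 : ℝ) - (b i : ℝ) - (c i : ℝ)

/-- `G` is antipodal with diameter `D`: being equal or at distance `D` is an equivalence
relation on the vertices. -/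
def IsAntipodal (G : SimpleGraph V) (D : ℕ) : Prop :=
  ∀ u v w : V, G.dist u v = D → G.dist u w = D → (v = w ∨ G.dist v w = D)

/-- `G` is an antipodal `r`-cover with diameter `D`: every antipodal class has exactly `r`
elements. -/
def IsAntipodalCover (G : SimpleGraph V) (D r : ℕ) : Prop :=
  IsAntipodal G D ∧ ∀ x : V, ({y : V | y = x ∨ G.dist x y = D} : Set V).ncard = r

/-! Every distance matrix is a polynomial `A_i = v_i(A)` in the adjacency matrix, so by the spectral
mapping theorem the eigenvalues of `𝔻_q` are the values at `k, θ₁, θ₂, θ₃` of the single polynomial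
`f = ∑ (1 + 1/q + ⋯ + 1/q^{i-1}) v_i`. For an antipodal `r`-cover of diameter 3, counting gives the
array `{k, c₂(r-1), 1; 1, c₂, k}`, so that `θ₂ = -1`, while `θ₁` and `θ₃` are the roots of
`θ² + (c₂ - a₁)θ - k`. The pair `(v₂, v₃)` equals `(k(r-1), r-1)` at `k`, `(1-r, r-1)` at `-1` and
`(-θ, -1)` at each root `θ`. Hence `f(k)` is strictly the largest value and `f(θ₁)` strictly the
smallest, and there are exactly three values if and only if `f(-1) = f(θ₃)`, a linear equation
in `θ₃`. -/

open Polynomial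

section Spectrum

theorem spectrum_aeval_of_cfc {A : Type*} {P : A → Prop} [TopologicalSpace A] [Ring A] [StarRing A]
    [Algebra ℝ A] [ContinuousFunctionalCalculus ℝ A P] {a : A} (ha : P a) (p : ℝ[X]) :
    spectrum ℝ (aeval a p) = p.eval '' spectrum ℝ a := by
  rw [← cfc_polynomial p a ha, cfc_map_spectrum p.eval a ha]

theorem eval_eq_zero_of_mem_spectrum_of_aeval_eq_zero {𝕜 A : Type*} [Field 𝕜] [Ring A]
    [Algebra 𝕜 A] {a : A} {p : 𝕜[X]} (hp : aeval a p = 0) {θ : 𝕜} (hθ : θ ∈ spectrum 𝕜 a) :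
    p.eval θ = 0 := by
  have hmem : p.eval θ ∈ spectrum 𝕜 (aeval a p) :=
    spectrum.subset_polynomial_aeval a p ⟨θ, hθ, rfl⟩
  cases subsingleton_or_nontrivial A
  · simp [spectrum.of_subsingleton] at hθ
  · rwa [hp, spectrum.zero_eq] at hmem

end Spectrum

section NumbersAndSets

theorem ncard_insert_insert_pair_eq_three_iff {α : Type*} {w x y z : α}
    (hw : w ∉ ({x, y, z} : Set α)) (hx : x ∉ ({y, z} : Set α)) :
    ({w, x, y, z} : Set α).ncard = 3 ↔ y = z := by
  rw [Set.ncard_insert_of_notMem hw, Set.ncard_insert_of_notMem hx]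
  by_cases hyz : y = z
  · simp [hyz]
  · simp [Set.ncard_pair hyz, hyz]

theorem monic_quadratic_eq_mul {K : Type*} [Field K] {m n x y : K} (hxy : x ≠ y)
    (hx : x ^ 2 + m * x + n = 0) (hy : y ^ 2 + m * y + n = 0) (t : K) :
    t ^ 2 + m * t + n = (t - x) * (t - y) := by
  have hsum : x + y = -m :=
    mul_left_cancel₀ (sub_ne_zero.mpr hxy) (by linear_combination hx - hy)
  linear_combination hx + (t - x) * hsum

variable {K : Type*} [Field K] [LinearOrder K] [IsStrictOrderedRing K] {m n x y z t : K}

theorem lt_and_lt_of_monic_quadratic_neg (hxy : x < y) (hx : x ^ 2 + m * x + n = 0)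
    (hy : y ^ 2 + m * y + n = 0) (ht : t ^ 2 + m * t + n < 0) : x < t ∧ t < y := by
  rw [monic_quadratic_eq_mul hxy.ne hx hy] at ht
  rcases mul_neg_iff.mp ht with ⟨hxt, hty⟩ | ⟨htx, hyt⟩
  · exact ⟨sub_pos.mp hxt, sub_neg.mp hty⟩
  · exact absurd (sub_neg.mp htx) (by linarith)

theorem eq_middle_of_monic_quadratic_neg (ht : t ^ 2 + m * t + n < 0) (hzy : z < y) (hyx : y < x)
    (hx : x = t ∨ x ^ 2 + m * x + n = 0) (hy : y = t ∨ y ^ 2 + m * y + n = 0)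
    (hz : z = t ∨ z ^ 2 + m * z + n = 0) :
    y = t ∧ x ^ 2 + m * x + n = 0 ∧ z ^ 2 + m * z + n = 0 := by
  rcases hy with rfl | hy
  · exact ⟨rfl, hx.resolve_left hyx.ne', hz.resolve_left hzy.ne⟩
  exfalso
  rcases hx with rfl | hx
  · have hz := hz.resolve_left (hzy.trans hyx).ne
    exact (lt_and_lt_of_monic_quadratic_neg hzy hz hy ht).2.not_gt hyx
  · have hyt := (lt_and_lt_of_monic_quadratic_neg hyx hy hx ht).1
    have hz := hz.resolve_left (hzy.trans hyt).ne
    exact (lt_and_lt_of_monic_quadratic_neg hzy hz hy ht).2.not_gt hyt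

end NumbersAndSets

section Distance

variable {W : Type*} {G : SimpleGraph W}

theorem exists_adj_dist_eq_succ (hG : G.Connected) {x w : W} {i : ℕ} (hi : i < G.dist x w) :
    ∃ y z, G.Adj y z ∧ G.dist x y = i ∧ G.dist x z = i + 1 := by
  obtain ⟨p, hp⟩ := hG.exists_walk_length_eq_dist x w
  have dist_getVert {j : ℕ} (hj : j ≤ p.length) : G.dist x (p.getVert j) = j := by
    rw [← SimpleGraph.length_eq_dist_of_subwalk hp (p.isSubwalk_take j)]
    simpa using hj
  exact ⟨p.getVert i, p.getVert (i + 1), p.adj_getVert_succ (hp ▸ hi),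
    dist_getVert (by lia), dist_getVert (by lia)⟩

theorem dist_le_dist_add_one (hG : G.Connected) {x y z : W} (hyz : G.Adj y z) :
    G.dist x z ≤ G.dist x y + 1 :=
  SimpleGraph.dist_eq_one_iff_adj.mpr hyz ▸ hG.dist_triangle

theorem ncard_adj_eq_sum_dist [Finite W] (hG : G.Connected) {x y : W} {i : ℕ}
    (hxy : G.dist x y = i) :
    {z | G.Adj y z}.ncard = {z | G.Adj y z ∧ G.dist x z = i - 1}.ncard +
      {z | G.Adj y z ∧ G.dist x z = i}.ncard + {z | G.Adj y z ∧ G.dist x z = i + 1}.ncard := by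
  classical
  have := Fintype.ofFinite W
  simp only [Set.ncard_eq_toFinset_card', Set.toFinset_ofPred, Finset.card_filter,
    ← Finset.sum_add_distrib]
  refine Finset.sum_congr rfl fun z _ ↦ ?_
  by_cases hyz : G.Adj y z
  · have := dist_le_dist_add_one hG (x := x) hyz
    have := dist_le_dist_add_one hG (x := x) hyz.symm
    have : i = 0 → G.dist x z ≠ 0 := by
      rintro rfl
      rw [hG.dist_eq_zero_iff] at hxy
      rw [Ne, hG.dist_eq_zero_iff]
      exact hxy ▸ hyz.ne
    simp only [hyz, true_and]
    split_ifs <;> lia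
  · simp [hyz]

end Distance

section DistanceMatrix

variable {W : Type*} (G : SimpleGraph W)

theorem isSelfAdjoint_distM (i : ℕ) : IsSelfAdjoint (distM G i) := by
  ext x y
  simp [distM, G.dist_comm (u := x)]

theorem distM_zero_eq_one [DecidableEq W] {G : SimpleGraph W} (hG : G.Connected) :
    distM G 0 = 1 := by
  ext x y
  simp [distM, Matrix.one_apply, hG.dist_eq_zero_iff]

theorem distM_one_mul_distM_apply [Fintype W] (i : ℕ) (x y : W) :
    (distM G 1 * distM G i) y x = ({z | G.Adj y z ∧ G.dist x z = i}.ncard : ℝ) := by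
  classical
  simp only [Matrix.mul_apply, distM, Matrix.of_apply, SimpleGraph.dist_eq_one_iff_adj,
    G.dist_comm (v := x), ite_zero_mul_ite_zero, mul_one, Set.ncard_eq_toFinset_card',
    Set.toFinset_ofPred, Finset.sum_boole]

end DistanceMatrix

namespace IsDRG

variable {W : Type*} {G : SimpleGraph W} {D : ℕ} {b c : ℕ → ℕ}

section IntersectionNumbers

theorem connected (hG : IsDRG G D b c) : G.Connected := hG.1

theorem dist_le (hG : IsDRG G D b c) (x y : W) : G.dist x y ≤ D := hG.2.1 x y

theorem exists_dist_eq_diam (hG : IsDRG G D b c) : ∃ x y, G.dist x y = D := hG.2.2.1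

theorem c_one (hG : IsDRG G D b c) : c 1 = 1 := hG.2.2.2.1

theorem ncard_pred (hG : IsDRG G D b c) {x y : W} {i : ℕ} (hxy : G.dist x y = i) :
    {z | G.Adj y z ∧ G.dist x z = i - 1}.ncard = c i :=
  (hG.2.2.2.2 i (hxy ▸ hG.dist_le x y) x y hxy).1

theorem ncard_succ (hG : IsDRG G D b c) {x y : W} {i : ℕ} (hxy : G.dist x y = i) :
    {z | G.Adj y z ∧ G.dist x z = i + 1}.ncard = b i :=
  (hG.2.2.2.2 i (hxy ▸ hG.dist_le x y) x y hxy).2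

theorem ncard_adj (hG : IsDRG G D b c) (y : W) : {z | G.Adj y z}.ncard = b 0 := by
  simpa [SimpleGraph.dist_eq_one_iff_adj] using hG.ncard_succ (G.dist_self (v := y))

theorem b_diam (hG : IsDRG G D b c) : b D = 0 := by
  obtain ⟨x, y, hxy⟩ := hG.exists_dist_eq_diam
  rw [← hG.ncard_succ hxy]
  convert Set.ncard_empty W
  exact Set.eq_empty_of_forall_notMem fun z hz ↦ (hG.dist_le x z).not_gt (by simp [hz.2])

variable [Finite W]

theorem b_zero_eq (hG : IsDRG G D b c) {x y : W} {i : ℕ} (hxy : G.dist x y = i) :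
    b 0 = c i + {z | G.Adj y z ∧ G.dist x z = i}.ncard + b i := by
  rw [← hG.ncard_adj y, ncard_adj_eq_sum_dist hG.connected hxy, hG.ncard_pred hxy,
    hG.ncard_succ hxy]

theorem ncard_same (hG : IsDRG G D b c) {x y : W} {i : ℕ} (hxy : G.dist x y = i) :
    ({z | G.Adj y z ∧ G.dist x z = i}.ncard : ℝ) = aInt b c i := by
  simp only [aInt, hG.b_zero_eq hxy]
  push_cast
  ring

theorem c_add_b_le (hG : IsDRG G D b c) {i : ℕ} (hi : i < D) : c i + b i ≤ b 0 := by
  obtain ⟨x, w, hxw⟩ := hG.exists_dist_eq_diam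
  obtain ⟨y, -, -, hxy, -⟩ := exists_adj_dist_eq_succ hG.connected (hxw.symm ▸ hi)
  have := hG.b_zero_eq hxy
  lia

theorem b_pos (hG : IsDRG G D b c) {i : ℕ} (hi : i < D) : 0 < b i := by
  obtain ⟨x, w, hxw⟩ := hG.exists_dist_eq_diam
  obtain ⟨y, z, hyz, hxy, hxz⟩ := exists_adj_dist_eq_succ hG.connected (hxw.symm ▸ hi)
  rw [← hG.ncard_succ hxy]
  exact (Set.ncard_pos).mpr ⟨z, hyz, hxz⟩

theorem c_succ_pos (hG : IsDRG G D b c) {i : ℕ} (hi : i < D) : 0 < c (i + 1) := by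
  obtain ⟨x, w, hxw⟩ := hG.exists_dist_eq_diam
  obtain ⟨y, z, hyz, hxy, hxz⟩ := exists_adj_dist_eq_succ hG.connected (hxw.symm ▸ hi)
  rw [← hG.ncard_pred hxz]
  exact (Set.ncard_pos).mpr ⟨y, hyz.symm, hxy⟩

theorem ncard_sphere_mul_b (hG : IsDRG G D b c) (x : W) (i : ℕ) :
    {y | G.dist x y = i}.ncard * b i = {z | G.dist x z = i + 1}.ncard * c (i + 1) := by
  classical
  have := Fintype.ofFinite W
  simp only [Set.ncard_eq_toFinset_card', Set.toFinset_ofPred]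
  refine Finset.card_mul_eq_card_mul G.Adj (fun y hy ↦ ?_) fun z hz ↦ ?_
  · rw [← hG.ncard_succ (Finset.mem_filter.mp hy).2, Set.ncard_eq_toFinset_card']
    congr 1
    ext z
    simp [and_comm]
  · rw [← hG.ncard_pred (Finset.mem_filter.mp hz).2, Set.ncard_eq_toFinset_card']
    congr 1
    ext y
    simp [and_comm, G.adj_comm]

theorem prod_b_eq_ncard_sphere_mul_prod_c (hG : IsDRG G D b c) (x : W) (i : ℕ) :
    ∏ j ∈ Finset.range i, b j = {y | G.dist x y = i}.ncard * ∏ j ∈ Finset.range i, c (j + 1) := by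
  induction i with
  | zero =>
    have hself : {y | G.dist x y = 0} = {x} := by
      ext y
      simp [hG.connected.dist_eq_zero_iff, eq_comm]
    rw [hself, Set.ncard_singleton, Finset.prod_range_zero, Finset.prod_range_zero, one_mul]
  | succ i ih =>
    rw [Finset.prod_range_succ, Finset.prod_range_succ, ih, mul_right_comm,
      hG.ncard_sphere_mul_b x i]
    ring

end IntersectionNumbers

end IsDRG

section DistancePolynomials

/-- The distance polynomials `v_i` of an intersection array, defined by
`c_{i+1} v_{i+1} = (x - a_i) v_i - b_{i-1} v_{i-1}`, so that `A_i = v_i(A)` in a distance-regular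
graph. Beyond the diameter they carry no meaning. -/
noncomputable def distPoly (b c : ℕ → ℕ) : ℕ → ℝ[X]
  | 0 => 1
  | 1 => X
  | i + 2 => C (c (i + 2) : ℝ)⁻¹ *
      ((X - C (aInt b c (i + 1))) * distPoly b c (i + 1) - C (b i : ℝ) * distPoly b c i)

/-- The polynomial `∑_{i=1}^D (1 + 1/q + ⋯ + 1/q^{i-1}) v_i`, whose value at the adjacency matrix
of a distance-regular graph is the `q`-distance matrix. -/
noncomputable def qDistPoly (b c : ℕ → ℕ) (D : ℕ) (q : ℝ) : ℝ[X] :=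
  ∑ i ∈ Finset.Icc 1 D, C (∑ j ∈ Finset.range i, (1 / q) ^ j) * distPoly b c i

theorem distPoly_zero (b c : ℕ → ℕ) : distPoly b c 0 = 1 := rfl

theorem distPoly_one (b c : ℕ → ℕ) : distPoly b c 1 = X := rfl

theorem c_mul_eval_distPoly {b c : ℕ → ℕ} {i : ℕ} (hc : c (i + 2) ≠ 0) (θ : ℝ) :
    c (i + 2) * (distPoly b c (i + 2)).eval θ =
      (θ - aInt b c (i + 1)) * (distPoly b c (i + 1)).eval θ - b i * (distPoly b c i).eval θ := by
  have hc : (c (i + 2) : ℝ) ≠ 0 := Nat.cast_ne_zero.mpr hc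
  simp [distPoly, mul_inv_cancel_left₀ hc]

theorem eval_qDistPoly_three (b c : ℕ → ℕ) (q θ : ℝ) :
    (qDistPoly b c 3 q).eval θ = θ + (1 + 1 / q) * (distPoly b c 2).eval θ +
      (1 + 1 / q + (1 / q) ^ 2) * (distPoly b c 3).eval θ := by
  simp [qDistPoly, Finset.sum_Icc_succ_top, Finset.sum_range_succ, distPoly_one]

namespace IsDRG

variable {W : Type*} [Fintype W] {G : SimpleGraph W} {D : ℕ} {b c : ℕ → ℕ}

theorem distM_one_mul_distM_succ (hG : IsDRG G D b c) (i : ℕ) :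
    distM G 1 * distM G (i + 1) = (b i : ℝ) • distM G i + aInt b c (i + 1) • distM G (i + 1) +
      (c (i + 2) : ℝ) • distM G (i + 2) := by
  ext y x
  rw [distM_one_mul_distM_apply]
  obtain hxy | hxy | hxy | hfar : G.dist x y = i ∨ G.dist x y = i + 1 ∨ G.dist x y = i + 2 ∨
      (G.dist x y ≠ i ∧ G.dist x y ≠ i + 1 ∧ G.dist x y ≠ i + 2) := by tauto
  · simp [distM, G.dist_comm (v := x), hxy, hG.ncard_succ hxy]
  · simp [distM, G.dist_comm (v := x), hxy, hG.ncard_same hxy]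
  · simp [distM, G.dist_comm (v := x), hxy, ← hG.ncard_pred hxy]
  · have hempty : {z | G.Adj y z ∧ G.dist x z = i + 1} = ∅ := by
      refine Set.eq_empty_of_forall_notMem fun z ⟨hyz, hxz⟩ ↦ ?_
      have := dist_le_dist_add_one hG.connected (x := x) hyz
      have := dist_le_dist_add_one hG.connected (x := x) hyz.symm
      lia
    simp [distM, G.dist_comm (v := x), hfar, hempty]

variable [DecidableEq W]

theorem aeval_distPoly (hG : IsDRG G D b c) {i : ℕ} (hi : i ≤ D) :
    aeval (distM G 1) (distPoly b c i) = distM G i := by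
  induction i using Nat.twoStepInduction with
  | zero => simp [distPoly_zero, distM_zero_eq_one hG.connected]
  | one => simp [distPoly_one]
  | more i ih₀ ih₁ =>
    have hc : (c (i + 2) : ℝ) ≠ 0 := Nat.cast_ne_zero.mpr (hG.c_succ_pos hi).ne'
    simp only [distPoly, map_mul, map_sub, aeval_C, aeval_X, ih₀ (by lia), ih₁ (by lia), sub_mul,
      ← Algebra.smul_def, hG.distM_one_mul_distM_succ]
    rw [inv_smul_eq_iff₀ hc]
    abel

theorem mul_eval_distPoly_of_mem_spectrum (hG : IsDRG G (D + 1) b c) {θ : ℝ}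
    (hθ : θ ∈ spectrum ℝ (distM G 1)) :
    θ * (distPoly b c (D + 1)).eval θ =
      b D * (distPoly b c D).eval θ + aInt b c (D + 1) * (distPoly b c (D + 1)).eval θ := by
  have distM_beyond : distM G (D + 2) = 0 := by
    ext x y
    simpa [distM] using ((hG.dist_le x y).trans_lt (by lia)).ne
  have haeval : aeval (distM G 1) (X * distPoly b c (D + 1) -
      (C (b D : ℝ) * distPoly b c D + C (aInt b c (D + 1)) * distPoly b c (D + 1))) = 0 := by
    simp only [map_sub, map_add, map_mul, aeval_X, aeval_C, ← Algebra.smul_def,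
      hG.aeval_distPoly le_rfl, hG.aeval_distPoly D.le_succ, hG.distM_one_mul_distM_succ,
      distM_beyond, smul_zero, add_zero, sub_self]
  have := eval_eq_zero_of_mem_spectrum_of_aeval_eq_zero haeval hθ
  simpa [sub_eq_zero] using this

theorem spectrum_qDist (hG : IsDRG G D b c) (q : ℝ) :
    spectrum ℝ (qDist G D q) = (qDistPoly b c D q).eval '' spectrum ℝ (distM G 1) := by
  rw [← spectrum_aeval_of_cfc (isSelfAdjoint_distM G 1), qDist, qDistPoly, map_sum]
  congr 1
  refine Finset.sum_congr rfl fun i hi ↦ ?_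
  rw [map_mul, aeval_C, ← Algebra.smul_def, hG.aeval_distPoly (Finset.mem_Icc.mp hi).2]

end IsDRG

end DistancePolynomials

section AntipodalCovers

/-- The intersection array `{k, c₂(r-1), 1; 1, c₂, k}` of an antipodal `r`-cover of diameter 3,
where `k = b 0`, together with the inequalities satisfied by the array of a graph. The entry
`b₁ = c₂(r-1)` is recorded without the truncated subtraction. -/
structure IsAntipodalCoverArray (b c : ℕ → ℕ) (r : ℕ) : Prop where
  b_one_add_c_two : b 1 + c 2 = r * c 2
  b_two : b 2 = 1
  b_three : b 3 = 0
  c_one : c 1 = 1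
  c_three : c 3 = b 0
  c_two_pos : 0 < c 2
  one_lt_r : 1 < r
  b_one_lt : b 1 < b 0
  c_two_lt : c 2 < b 0

variable {W : Type*} {G : SimpleGraph W} {D r : ℕ} {b c : ℕ → ℕ}

theorem IsAntipodal.dist_ne_diam_of_adj (hG : IsAntipodal G D) (hD : 2 ≤ D) {x y z : W}
    (hxy : G.dist x y = D) (hyz : G.Adj y z) : G.dist x z ≠ D := by
  intro hxz
  have hdist := SimpleGraph.dist_eq_one_iff_adj.mpr hyz
  rcases hG x y z hxy hxz with rfl | hyz'
  · exact hyz.ne rfl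
  · lia

theorem IsAntipodalCover.ncard_dist_eq_diam_add_one [Finite W] (hG : IsAntipodalCover G D r)
    (hD : D ≠ 0) (x : W) : {y | G.dist x y = D}.ncard + 1 = r := by
  rw [← hG.2 x, ← Set.ncard_insert_of_notMem (a := x) (by simpa using hD.symm)]
  rfl

namespace IsDRG

variable [Finite W]

theorem c_diam_eq_b_zero (hG : IsDRG G D b c) (hA : IsAntipodal G D) (hD : 2 ≤ D) :
    c D = b 0 := by
  obtain ⟨x, y, hxy⟩ := hG.exists_dist_eq_diam
  have hsame : {z | G.Adj y z ∧ G.dist x z = D} = ∅ :=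
    Set.eq_empty_of_forall_notMem fun z hz ↦ hA.dist_ne_diam_of_adj hD hxy hz.1 hz.2
  rw [hG.b_zero_eq hxy, hsame, Set.ncard_empty, hG.b_diam, add_zero, add_zero]

theorem b_pred_diam_eq_one (hG : IsDRG G (D + 1) b c) (hA : IsAntipodal G (D + 1)) (hD : 2 ≤ D) :
    b D = 1 := by
  refine le_antisymm ?_ (hG.b_pos D.lt_succ_self)
  obtain ⟨x, w, hxw⟩ := hG.exists_dist_eq_diam
  obtain ⟨y, -, -, hxy, -⟩ :=
    exists_adj_dist_eq_succ hG.connected (hxw ▸ D.lt_succ_self : D < G.dist x w)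
  rw [← hG.ncard_succ hxy, Set.ncard_le_one_iff]
  rintro z z' ⟨hyz, hxz⟩ ⟨hyz', hxz'⟩
  refine (hA x z z' hxz hxz').resolve_right fun hzz' ↦ ?_
  have := dist_le_dist_add_one hG.connected (x := z) hyz'
  have := SimpleGraph.dist_eq_one_iff_adj.mpr hyz.symm
  lia

theorem isAntipodalCoverArray (hG : IsDRG G 3 b c) (hcov : IsAntipodalCover G 3 r) :
    IsAntipodalCoverArray b c r := by
  obtain ⟨x, y, hxy⟩ := hG.exists_dist_eq_diam
  have hb₀ : 0 < b 0 := hG.b_pos (by lia)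
  have hb₂ : b 2 = 1 := hG.b_pred_diam_eq_one hcov.1 le_rfl
  have hc₃ : c 3 = b 0 := hG.c_diam_eq_b_zero hcov.1 (by lia)
  have hr := hcov.ncard_dist_eq_diam_add_one (by lia) x
  have hb₁ : b 1 = {z | G.dist x z = 3}.ncard * c 2 := by
    have hprod := hG.prod_b_eq_ncard_sphere_mul_prod_c x 3
    simp only [Finset.prod_range_succ, Finset.prod_range_zero, hG.c_one, hb₂, hc₃, one_mul,
      mul_one, zero_add, Nat.reduceAdd] at hprod
    exact Nat.eq_of_mul_eq_mul_left hb₀ (by linarith)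
  have hpos : 0 < {z | G.dist x z = 3}.ncard := (Set.ncard_pos).mpr ⟨y, hxy⟩
  have hle₁ := hG.c_add_b_le (i := 1) (by lia)
  have hle₂ := hG.c_add_b_le (i := 2) (by lia)
  rw [hG.c_one] at hle₁
  exact {
    b_one_add_c_two := by rw [hb₁, ← hr]; ring
    b_two := hb₂
    b_three := hG.b_diam
    c_one := hG.c_one
    c_three := hc₃
    c_two_pos := hG.c_succ_pos (by lia)
    one_lt_r := by lia
    b_one_lt := by lia
    c_two_lt := by lia }

end IsDRG

/-- The quadratic `θ² + (c₂ - a₁)θ - k`, whose roots are the adjacency eigenvalues other than `k`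
and `-1` of an antipodal cover of diameter 3. -/
noncomputable def coverQuadratic (b c : ℕ → ℕ) (θ : ℝ) : ℝ :=
  θ ^ 2 + (c 2 - aInt b c 1) * θ + -b 0

namespace IsAntipodalCoverArray

theorem b_one_eq (h : IsAntipodalCoverArray b c r) : (b 1 : ℝ) = (r - 1) * c 2 := by
  have : (b 1 : ℝ) + c 2 = r * c 2 := mod_cast h.b_one_add_c_two
  linarith

theorem aInt_one (h : IsAntipodalCoverArray b c r) : aInt b c 1 = b 0 - b 1 - 1 := by
  simp [aInt, h.c_one]

theorem aInt_two (h : IsAntipodalCoverArray b c r) : aInt b c 2 = b 0 - 1 - c 2 := by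
  simp [aInt, h.b_two]

theorem aInt_three (h : IsAntipodalCoverArray b c r) : aInt b c 3 = 0 := by
  simp [aInt, h.b_three, h.c_three]

theorem b_zero_pos (h : IsAntipodalCoverArray b c r) : 0 < b 0 := h.c_two_pos.trans h.c_two_lt

theorem coverQuadratic_neg_one_neg (h : IsAntipodalCoverArray b c r) :
    coverQuadratic b c (-1) < 0 := by
  have hc : (0 : ℝ) < c 2 := mod_cast h.c_two_pos
  have hfactor : coverQuadratic b c (-1) = -(b 1 + c 2) := by
    rw [coverQuadratic, h.aInt_one]
    ring
  rw [hfactor, neg_lt_zero]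
  positivity

theorem coverQuadratic_neg_b_zero_nonneg (h : IsAntipodalCoverArray b c r) :
    0 ≤ coverQuadratic b c (-b 0) := by
  have hb : (b 1 : ℝ) + 1 ≤ b 0 := mod_cast h.b_one_lt
  have hc : (c 2 : ℝ) + 1 ≤ b 0 := mod_cast h.c_two_lt
  have hfactor : coverQuadratic b c (-b 0) = b 0 * ((b 0 - b 1 - 1) + (b 0 - c 2 - 1)) := by
    rw [coverQuadratic, h.aInt_one]
    ring
  rw [hfactor]
  exact mul_nonneg (Nat.cast_nonneg _) (by linarith)

theorem c_two_mul_eval_distPoly_two (h : IsAntipodalCoverArray b c r) (θ : ℝ) :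
    c 2 * (distPoly b c 2).eval θ = coverQuadratic b c θ - c 2 * θ := by
  have := c_mul_eval_distPoly (b := b) h.c_two_pos.ne' θ
  simp only [distPoly_zero, distPoly_one, eval_one, eval_X, zero_add] at this
  rw [this, coverQuadratic]
  ring

theorem b_zero_mul_eval_distPoly_three (h : IsAntipodalCoverArray b c r) (θ : ℝ) :
    b 0 * (distPoly b c 3).eval θ =
      (θ - (b 0 - 1 - c 2)) * (distPoly b c 2).eval θ - b 1 * θ := by
  have := c_mul_eval_distPoly (b := b) (c := c) (i := 1) (by simp [h.c_three, h.b_zero_pos.ne']) θ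
  simpa only [distPoly_one, eval_X, Nat.reduceAdd, h.c_three, h.aInt_two] using this

theorem eval_distPoly_two_b_zero (h : IsAntipodalCoverArray b c r) :
    (distPoly b c 2).eval (b 0 : ℝ) = b 0 * (r - 1) := by
  have hc : (c 2 : ℝ) ≠ 0 := mod_cast h.c_two_pos.ne'
  refine mul_left_cancel₀ hc ?_
  rw [h.c_two_mul_eval_distPoly_two, coverQuadratic, h.aInt_one, h.b_one_eq]
  ring

theorem eval_distPoly_three_b_zero (h : IsAntipodalCoverArray b c r) :
    (distPoly b c 3).eval (b 0 : ℝ) = r - 1 := by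
  have hb : (b 0 : ℝ) ≠ 0 := mod_cast h.b_zero_pos.ne'
  refine mul_left_cancel₀ hb ?_
  rw [h.b_zero_mul_eval_distPoly_three, h.eval_distPoly_two_b_zero, h.b_one_eq]
  ring

theorem eval_distPoly_two_neg_one (h : IsAntipodalCoverArray b c r) :
    (distPoly b c 2).eval (-1) = 1 - (r : ℝ) := by
  have hc : (c 2 : ℝ) ≠ 0 := mod_cast h.c_two_pos.ne'
  refine mul_left_cancel₀ hc ?_
  rw [h.c_two_mul_eval_distPoly_two, coverQuadratic, h.aInt_one, h.b_one_eq]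
  ring

theorem eval_distPoly_three_neg_one (h : IsAntipodalCoverArray b c r) :
    (distPoly b c 3).eval (-1) = (r : ℝ) - 1 := by
  have hb : (b 0 : ℝ) ≠ 0 := mod_cast h.b_zero_pos.ne'
  refine mul_left_cancel₀ hb ?_
  rw [h.b_zero_mul_eval_distPoly_three, h.eval_distPoly_two_neg_one, h.b_one_eq]
  ring

theorem eval_distPoly_two_of_root (h : IsAntipodalCoverArray b c r) {θ : ℝ}
    (hθ : coverQuadratic b c θ = 0) : (distPoly b c 2).eval θ = -θ := by
  have hc : (c 2 : ℝ) ≠ 0 := mod_cast h.c_two_pos.ne'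
  refine mul_left_cancel₀ hc ?_
  rw [h.c_two_mul_eval_distPoly_two, hθ]
  ring

theorem eval_distPoly_three_of_root (h : IsAntipodalCoverArray b c r) {θ : ℝ}
    (hθ : coverQuadratic b c θ = 0) : (distPoly b c 3).eval θ = -1 := by
  have hb : (b 0 : ℝ) ≠ 0 := mod_cast h.b_zero_pos.ne'
  refine mul_left_cancel₀ hb ?_
  rw [h.b_zero_mul_eval_distPoly_three, h.eval_distPoly_two_of_root hθ]
  rw [coverQuadratic, h.aInt_one] at hθ
  linear_combination -hθ

theorem eval_qDistPoly_b_zero (h : IsAntipodalCoverArray b c r) (q : ℝ) :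
    (qDistPoly b c 3 q).eval (b 0 : ℝ) =
      b 0 + (1 + 1 / q) * (b 0 * (r - 1)) + (1 + 1 / q + (1 / q) ^ 2) * (r - 1) := by
  rw [eval_qDistPoly_three, h.eval_distPoly_two_b_zero, h.eval_distPoly_three_b_zero]

theorem eval_qDistPoly_neg_one (h : IsAntipodalCoverArray b c r) (q : ℝ) :
    (qDistPoly b c 3 q).eval (-1) = (r - 1) * (1 / q) ^ 2 - 1 := by
  rw [eval_qDistPoly_three, h.eval_distPoly_two_neg_one, h.eval_distPoly_three_neg_one]
  ring

theorem eval_qDistPoly_of_root (h : IsAntipodalCoverArray b c r) (q : ℝ) {θ : ℝ}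
    (hθ : coverQuadratic b c θ = 0) :
    (qDistPoly b c 3 q).eval θ = -(1 / q) * (θ + 1) - 1 - (1 / q) ^ 2 := by
  rw [eval_qDistPoly_three, h.eval_distPoly_two_of_root hθ, h.eval_distPoly_three_of_root hθ]
  ring

theorem neg_b_zero_le_of_roots (h : IsAntipodalCoverArray b c r) {x y : ℝ} (hyx : y < x)
    (hx : coverQuadratic b c x = 0) (hy : coverQuadratic b c y = 0) : -(b 0 : ℝ) ≤ y := by
  have hfactor : coverQuadratic b c (-b 0) = (-b 0 - x) * (-b 0 - y) :=
    monic_quadratic_eq_mul hyx.ne' hx hy _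
  have hx' : -1 < x :=
    (lt_and_lt_of_monic_quadratic_neg hyx hy hx h.coverQuadratic_neg_one_neg).2
  have hb : (1 : ℝ) ≤ b 0 := mod_cast h.b_zero_pos
  have hprod : 0 ≤ (-b 0 - x) * (-b 0 - y) := hfactor ▸ h.coverQuadratic_neg_b_zero_nonneg
  linarith [nonpos_of_mul_nonneg_right hprod (by linarith)]

variable {q : ℝ}

theorem eval_qDistPoly_neg_one_lt_b_zero (h : IsAntipodalCoverArray b c r) (hq : 0 < q) :
    (qDistPoly b c 3 q).eval (-1) < (qDistPoly b c 3 q).eval (b 0 : ℝ) := by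
  have hr : (0 : ℝ) < r - 1 := sub_pos.mpr (mod_cast h.one_lt_r)
  have hb : (0 : ℝ) < b 0 := mod_cast h.b_zero_pos
  rw [h.eval_qDistPoly_neg_one, h.eval_qDistPoly_b_zero, ← sub_pos]
  have : 0 < b 0 + (1 + 1 / q) * (b 0 * (r - 1)) + (1 + 1 / q) * (r - 1) + 1 := by positivity
  linarith

theorem eval_qDistPoly_lt_b_zero_of_root (h : IsAntipodalCoverArray b c r) (hq : 0 < q) {θ : ℝ}
    (hθ : coverQuadratic b c θ = 0) (hθb : -(b 0 : ℝ) ≤ θ) :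
    (qDistPoly b c 3 q).eval θ < (qDistPoly b c 3 q).eval (b 0 : ℝ) := by
  have hr : (1 : ℝ) ≤ r - 1 := by
    have : (2 : ℝ) ≤ r := mod_cast h.one_lt_r
    linarith
  have hb : (0 : ℝ) < b 0 := mod_cast h.b_zero_pos
  have hp : 0 < 1 / q := by positivity
  calc (qDistPoly b c 3 q).eval θ = -(1 / q) * (θ + 1) - 1 - (1 / q) ^ 2 :=
        h.eval_qDistPoly_of_root q hθ
    _ < (1 + 1 / q) * (b 0 * 1) := by nlinarith
    _ ≤ (1 + 1 / q) * (b 0 * (r - 1)) := by gcongr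
    _ ≤ b 0 + (1 + 1 / q) * (b 0 * (r - 1)) + (1 + 1 / q + (1 / q) ^ 2) * (r - 1) := by
        have : 0 ≤ (1 + 1 / q + (1 / q) ^ 2) * (r - 1 : ℝ) := by positivity
        linarith
    _ = (qDistPoly b c 3 q).eval (b 0 : ℝ) := (h.eval_qDistPoly_b_zero q).symm

theorem eval_qDistPoly_lt_neg_one_of_root (h : IsAntipodalCoverArray b c r) (hq : 0 < q) {θ : ℝ}
    (hθ : coverQuadratic b c θ = 0) (hθ' : -1 < θ) :
    (qDistPoly b c 3 q).eval θ < (qDistPoly b c 3 q).eval (-1) := by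
  have hr : (0 : ℝ) < r := by exact_mod_cast h.one_lt_r.le
  rw [h.eval_qDistPoly_of_root q hθ, h.eval_qDistPoly_neg_one]
  have : 0 < 1 / q * (θ + 1) := mul_pos (by positivity) (by linarith)
  have : 0 < r * (1 / q) ^ 2 := by positivity
  linarith

theorem eval_qDistPoly_lt_of_roots (h : IsAntipodalCoverArray b c r) (hq : 0 < q) {x y : ℝ}
    (hx : coverQuadratic b c x = 0) (hy : coverQuadratic b c y = 0) (hyx : y < x) :
    (qDistPoly b c 3 q).eval x < (qDistPoly b c 3 q).eval y := by
  rw [h.eval_qDistPoly_of_root q hx, h.eval_qDistPoly_of_root q hy]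
  have : 1 / q * y < 1 / q * x := by gcongr
  linarith

theorem eval_qDistPoly_neg_one_eq_iff_of_root (h : IsAntipodalCoverArray b c r) (hq : q ≠ 0)
    {θ : ℝ} (hθ : coverQuadratic b c θ = 0) :
    (qDistPoly b c 3 q).eval (-1) = (qDistPoly b c 3 q).eval θ ↔ θ = -(r : ℝ) / q - 1 := by
  rw [h.eval_qDistPoly_of_root q hθ, h.eval_qDistPoly_neg_one]
  field_simp
  constructor <;> intro heq <;> linarith

theorem eq_neg_one_or_root_of_mem_spectrum [Fintype W] [DecidableEq W]
    (h : IsAntipodalCoverArray b c r) (hG : IsDRG G 3 b c) {θ : ℝ}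
    (hθ : θ ∈ spectrum ℝ (distM G 1)) (hne : θ ≠ b 0) : θ = -1 ∨ coverQuadratic b c θ = 0 := by
  have hlast := hG.mul_eval_distPoly_of_mem_spectrum hθ
  simp only [Nat.reduceAdd, h.b_two, h.aInt_three] at hlast
  -- With `u = (θ - k) * (θ + 1)`, eliminating `v₂` and `v₃` gives `u * (u + (b₁ + c₂) * θ) = 0`,
  -- whose second factor is the quadratic.
  have hzero : (θ - b 0) * ((θ + 1) * coverQuadratic b c θ) = 0 := by
    have htwo := h.c_two_mul_eval_distPoly_two θ
    rw [coverQuadratic, h.aInt_one] at htwo ⊢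
    linear_combination (-((θ - b 0) * (θ + 1) + c 2 * θ)) * htwo -
      c 2 * θ * h.b_zero_mul_eval_distPoly_three θ + c 2 * b 0 * hlast
  rcases (mul_eq_zero.mp hzero).resolve_left (sub_ne_zero.mpr hne) |> mul_eq_zero.mp with hθ | hθ
  · exact .inl (eq_neg_of_add_eq_zero_left hθ)
  · exact .inr hθ

theorem eigenvalues [Fintype W] [DecidableEq W] (h : IsAntipodalCoverArray b c r)
    (hG : IsDRG G 3 b c) {θ₁ θ₂ θ₃ : ℝ} (h₁ : θ₁ < b 0) (h₂ : θ₂ < θ₁) (h₃ : θ₃ < θ₂)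
    (hspec : spectrum ℝ (distM G 1) = {(b 0 : ℝ), θ₁, θ₂, θ₃}) :
    θ₂ = -1 ∧ coverQuadratic b c θ₁ = 0 ∧ coverQuadratic b c θ₃ = 0 :=
  eq_middle_of_monic_quadratic_neg h.coverQuadratic_neg_one_neg h₃ h₂
    (h.eq_neg_one_or_root_of_mem_spectrum hG (by simp [hspec]) h₁.ne)
    (h.eq_neg_one_or_root_of_mem_spectrum hG (by simp [hspec]) (h₂.trans h₁).ne)
    (h.eq_neg_one_or_root_of_mem_spectrum hG (by simp [hspec]) ((h₃.trans h₂).trans h₁).ne)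

end IsAntipodalCoverArray

end AntipodalCovers

/-- Proposition 3.10(1): an antipodal distance-regular graph of diameter
3 which is an antipodal `r`-cover, with distinct adjacency eigenvalues `k > θ₁ > θ₂ > θ₃`,
has exactly three distinct `q`-distance eigenvalues for `q > 0` if and only if
`θ₃ = −r/q − 1`. -/
theorem stmt14 (G : SimpleGraph V) (b c : ℕ → ℕ) (r : ℕ) (hG : IsDRG G 3 b c)
    (hcov : IsAntipodalCover G 3 r)
    (θ₁ θ₂ θ₃ : ℝ) (h1 : (b 0 : ℝ) > θ₁) (h2 : θ₁ > θ₂) (h3 : θ₂ > θ₃)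
    (hspec : spectrum ℝ (distM G 1) = ({(b 0 : ℝ), θ₁, θ₂, θ₃} : Set ℝ))
    (q : ℝ) (hq : 0 < q) :
    (spectrum ℝ (qDist G 3 q)).ncard = 3 ↔ θ₃ = -(r : ℝ) / q - 1 := by
  have harr := hG.isAntipodalCoverArray hcov
  obtain ⟨rfl, hθ₁, hθ₃⟩ := harr.eigenvalues hG h1 h2 h3 hspec
  have hlt_k := harr.eval_qDistPoly_lt_b_zero_of_root hq hθ₃
    (harr.neg_b_zero_le_of_roots (h3.trans h2) hθ₁ hθ₃)
  have hneg_one_lt_k := harr.eval_qDistPoly_neg_one_lt_b_zero hq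
  have hlt_neg_one := harr.eval_qDistPoly_lt_neg_one_of_root hq hθ₁ h2
  have hlt := harr.eval_qDistPoly_lt_of_roots hq hθ₁ hθ₃ (h3.trans h2)
  rw [hG.spectrum_qDist, hspec, Set.image_insert_eq, Set.image_insert_eq, Set.image_pair,
    ncard_insert_insert_pair_eq_three_iff, harr.eval_qDistPoly_neg_one_eq_iff_of_root hq.ne' hθ₃]
  · simp [(hlt.trans hlt_k).ne', hneg_one_lt_k.ne', hlt_k.ne']
  · simp [hlt_neg_one.ne, hlt.ne]
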